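/- arXiv:2001.02751 — 2 statements merged into one kernel-verified Lean document; each statement's English description precedes it below -/
import Mathlib

section
/- Let X be a compact metric space with metric d and α : X → X a homeomorphism. The following are equivalent: (i) every forward proximal pair consists of equal points; (ii) every proximal pair consists of equal points; (iii) every backward proximal pair consists of equal points. That is, the forward system (X,α,ℤ⁺) is distal iff (X,α,ℤ) is distal iff the backward system (X,α,ℤ⁻) is distal. -/
/-- The `n`-th power (`n : ℤ`) of a homeomorphism `α`, as a self-map. -/
def zIter {X : Type*} [TopologicalSpace X] (α : X ≃ₜ X) (n : ℤ) : X → X :=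
  if 0 ≤ n then (⇑α)^[n.toNat] else (⇑α.symm)^[(-n).toNat]

/-!
This is an enveloping-semigroup argument. Give `X → X` the topology of pointwise convergence.
Distality of a family of maps passes to every family inside the closure of its range, so it
suffices to see that all powers `α ^ k`, `k : ℤ`, are limits of nonnegative powers of `α`. The
cluster points of the sequence `α ^ n` as `n → ∞` form a nonempty compact right topological
semigroup, which contains an idempotent `u` by the Ellis–Numakura lemma. If the forward system is
distal then `u` is injective, so `u = id`. Hence `α ^ n` clusters at the identity and
`α ^ k ∘ α ^ n = α ^ (k + n)` clusters at `α ^ k`.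
-/

open Filter Function Set Topology
open scoped Uniformity

section Distal

variable {X ι κ : Type*} [UniformSpace X] {F : ι → X → X} {G : κ → X → X} {x y : X}

/-- The points `x` and `y` are proximal for a family `F` of self-maps if some members of `F` bring
them arbitrarily close together. The family is indexed by an arbitrary type, so that the forward,
backward and two-sided notions for a homeomorphism are instances of a single one. -/
def IsProximalPair (F : ι → X → X) (x y : X) : Prop :=
  ∀ U ∈ 𝓤 X, ∃ i, (F i x, F i y) ∈ U

/-- A family of self-maps is distal if its only proximal pairs are the diagonal ones. -/
def IsDistal (F : ι → X → X) : Prop :=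
  ∀ x y, IsProximalPair F x y → x = y

theorem IsProximalPair.of_range_subset_closure (hxy : IsProximalPair G x y)
    (hGF : range G ⊆ closure (range F)) : IsProximalPair F x y := by
  intro U hU
  obtain ⟨V, ⟨hV, hVopen⟩, hVU⟩ := uniformity_hasBasis_open.mem_iff.1 hU
  obtain ⟨j, hj⟩ := hxy V hV
  have hopen : IsOpen {g : X → X | (g x, g y) ∈ V} :=
    hVopen.preimage ((continuous_apply x).prodMk (continuous_apply y))
  obtain ⟨_, hi, i, rfl⟩ := mem_closure_iff.1 (hGF (mem_range_self j)) _ hopen hj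
  exact ⟨i, hVU hi⟩

theorem IsDistal.of_range_subset_closure (hF : IsDistal F)
    (hGF : range G ⊆ closure (range F)) : IsDistal G :=
  fun x y hxy ↦ hF x y (hxy.of_range_subset_closure hGF)

theorem IsDistal.injective_of_mem_closure_range (hF : IsDistal F) {u : X → X}
    (hu : u ∈ closure (range F)) : Injective u := by
  have hconst : IsDistal fun _ : Unit ↦ u :=
    hF.of_range_subset_closure (range_subset_iff.2 fun _ ↦ hu)
  exact fun x y hxy ↦ hconst x y fun U hU ↦ ⟨(), mem_uniformity_of_eq hU hxy⟩

end Distal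

theorem isDistal_iff_dist {X ι : Type*} [PseudoMetricSpace X] {F : ι → X → X} :
    IsDistal F ↔ ∀ x y, (∀ ε > 0, ∃ i, dist (F i x) (F i y) < ε) → x = y := by
  have hproximal (x y : X) :
      IsProximalPair F x y ↔ ∀ ε > 0, ∃ i, dist (F i x) (F i y) < ε :=
    Metric.uniformity_basis_dist.forall_iff fun _ _ hUV ⟨i, hi⟩ ↦ ⟨i, hUV hi⟩
  simp only [IsDistal, hproximal]

section Iterate

variable {X : Type*} {f : X → X}

theorem mapClusterPt_iterate_comp [TopologicalSpace X] {p q : X → X}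
    (hf : Continuous f) (hp : MapClusterPt p atTop fun n ↦ f^[n])
    (hq : MapClusterPt q atTop fun n ↦ f^[n]) :
    MapClusterPt (p ∘ q) atTop fun n ↦ f^[n] := by
  have hiterate_comp (m : ℕ) : MapClusterPt (f^[m] ∘ q) atTop fun n ↦ f^[n] := by
    have hcont : Continuous fun r : X → X ↦ f^[m] ∘ r :=
      continuous_pi fun x ↦ (hf.iterate m).comp (continuous_apply x)
    have hshift : MapClusterPt (f^[m] ∘ q) atTop fun n ↦ f^[m + n] := by
      simpa only [comp_def, iterate_add] using hq.continuousAt_comp hcont.continuousAt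
    exact hshift.of_comp (tendsto_atTop_mono (Nat.le_add_left · m) tendsto_id)
  have hcont : Continuous fun r : X → X ↦ r ∘ q :=
    continuous_pi fun x ↦ continuous_apply (q x)
  have hcomp : MapClusterPt (p ∘ q) atTop fun m ↦ f^[m] ∘ q :=
    hp.continuousAt_comp (f := (· ∘ q)) hcont.continuousAt
  exact isClosed_setOfPred_clusterPt.mem_of_mapClusterPt hcomp (.of_forall hiterate_comp)

theorem exists_mapClusterPt_iterate_comp_self_eq [TopologicalSpace X] [CompactSpace X] [T2Space X]
    (hf : Continuous f) :
    ∃ u, MapClusterPt u atTop (fun n ↦ f^[n]) ∧ u ∘ u = u := by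
  let _ : Semigroup (X → X) := inferInstanceAs (Semigroup (Function.End X))
  exact exists_idempotent_in_compact_subsemigroup
    (fun r : X → X ↦ continuous_pi fun x ↦ continuous_apply (r x))
    {u | MapClusterPt u atTop fun n ↦ f^[n]} (exists_clusterPt_of_compactSpace _)
    isClosed_setOfPred_clusterPt.isCompact
    fun p hp q hq ↦ mapClusterPt_iterate_comp (p := p) (q := q) hf hp hq

theorem IsDistal.mapClusterPt_id_iterate [UniformSpace X] [CompactSpace X] [T2Space X]
    (hdistal : IsDistal fun n : ℕ ↦ f^[n]) (hf : Continuous f) :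
    MapClusterPt id atTop fun n ↦ f^[n] := by
  obtain ⟨u, hu, huu⟩ := exists_mapClusterPt_iterate_comp_self_eq hf
  have hmem : u ∈ closure (range fun n : ℕ ↦ f^[n]) :=
    isClosed_closure.mem_of_mapClusterPt hu
      (.of_forall fun n ↦ subset_closure (mem_range_self n))
  have hid : u = id := (hdistal.injective_of_mem_closure_range hmem).comp_left huu
  rwa [hid] at hu

end Iterate

section IntegerIterate

variable {X : Type*}

theorem coe_homeomorph_pow [TopologicalSpace X] (α : X ≃ₜ X) (n : ℕ) :
    ⇑(α ^ n) = α^[n] :=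
  hom_coe_pow _ rfl (fun _ _ ↦ rfl) α n

theorem zIter_eq_coe_zpow [TopologicalSpace X] (α : X ≃ₜ X) (n : ℤ) :
    zIter α n = ⇑(α ^ n) := by
  obtain ⟨m, rfl | rfl⟩ := n.eq_nat_or_neg
  · simp [zIter, coe_homeomorph_pow]
  · rw [zpow_neg, ← inv_zpow, zpow_natCast, coe_homeomorph_pow]
    rcases m.eq_zero_or_pos with rfl | hm
    · simp [zIter]
    · have hneg : ¬(0 : ℤ) ≤ -m := by lia
      simp only [zIter, if_neg hneg, neg_neg, Int.toNat_natCast]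
      rfl

theorem range_iterate_subset_range_zIter [TopologicalSpace X] (α : X ≃ₜ X) :
    (range fun n : ℕ ↦ α^[n]) ⊆ range (zIter α) :=
  range_subset_iff.2 fun n ↦ ⟨n, by rw [zIter_eq_coe_zpow, zpow_natCast, coe_homeomorph_pow]⟩

theorem range_zIter_symm [TopologicalSpace X] (α : X ≃ₜ X) :
    range (zIter α.symm) = range (zIter α) := by
  have hneg : zIter α.symm = zIter α ∘ Neg.neg := by
    ext1 n
    rw [comp_apply, zIter_eq_coe_zpow, zIter_eq_coe_zpow, ← inv_zpow']
    rfl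
  rw [hneg, neg_surjective.range_comp]

theorem IsDistal.range_zIter_subset_closure [UniformSpace X] [CompactSpace X] [T2Space X]
    {α : X ≃ₜ X} (hα : IsDistal fun n : ℕ ↦ α^[n]) :
    range (zIter α) ⊆ closure (range fun n : ℕ ↦ α^[n]) := by
  rintro _ ⟨k, rfl⟩
  rw [zIter_eq_coe_zpow]
  have hcont : Continuous fun r : X → X ↦ ⇑(α ^ k) ∘ r :=
    continuous_pi fun x ↦ (α ^ k).continuous.comp (continuous_apply x)
  have hcluster : MapClusterPt ⇑(α ^ k) atTop fun n : ℕ ↦ ⇑(α ^ k) ∘ α^[n] :=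
    (hα.mapClusterPt_id_iterate α.continuous).continuousAt_comp hcont.continuousAt
  refine isClosed_closure.mem_of_mapClusterPt hcluster ?_
  filter_upwards [eventually_ge_atTop (-k).toNat] with n hn
  obtain ⟨m, hm⟩ := Int.eq_ofNat_of_zero_le (show 0 ≤ k + n by lia)
  have hpow : α ^ k * α ^ n = α ^ m := by
    rw [← zpow_natCast α n, ← zpow_add, hm, zpow_natCast]
  refine subset_closure ⟨m, ?_⟩
  simp only [← coe_homeomorph_pow, ← hpow]
  rfl

theorem isDistal_iterate_iff_isDistal_zIter [UniformSpace X] [CompactSpace X] [T2Space X]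
    (α : X ≃ₜ X) : IsDistal (fun n : ℕ ↦ α^[n]) ↔ IsDistal (zIter α) :=
  ⟨fun h ↦ h.of_range_subset_closure h.range_zIter_subset_closure,
    fun h ↦ h.of_range_subset_closure
      ((range_iterate_subset_range_zIter α).trans subset_closure)⟩

theorem isDistal_zIter_symm [UniformSpace X] (α : X ≃ₜ X) :
    IsDistal (zIter α.symm) ↔ IsDistal (zIter α) :=
  ⟨fun h ↦ h.of_range_subset_closure (range_zIter_symm α ▸ subset_closure),
    fun h ↦ h.of_range_subset_closure (range_zIter_symm α ▸ subset_closure)⟩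

end IntegerIterate

theorem stmt_8_general {X : Type*} [UniformSpace X] [CompactSpace X] [T2Space X] (α : X ≃ₜ X) :
    (IsDistal (fun n : ℕ ↦ (⇑α)^[n]) ↔ IsDistal (zIter α)) ∧
      (IsDistal (zIter α) ↔ IsDistal fun n : ℕ ↦ (⇑α.symm)^[n]) :=
  ⟨isDistal_iterate_iff_isDistal_zIter α,
    (isDistal_zIter_symm α).symm.trans (isDistal_iterate_iff_isDistal_zIter α.symm).symm⟩

/-- For a homeomorphism `α` of a compact metric space, forward distality,
distality and backward distality of the associated `ℤ`-action are all equivalent. -/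
theorem stmt_8 {X : Type*} [MetricSpace X] [CompactSpace X] (α : X ≃ₜ X) :
    ((∀ x y : X,
        (∀ ε > 0, ∃ n : ℕ, dist ((⇑α)^[n] x) ((⇑α)^[n] y) < ε) → x = y) ↔
      (∀ x y : X,
        (∀ ε > 0, ∃ n : ℤ, dist (zIter α n x) (zIter α n y) < ε) → x = y)) ∧
    ((∀ x y : X,
        (∀ ε > 0, ∃ n : ℤ, dist (zIter α n x) (zIter α n y) < ε) → x = y) ↔
      (∀ x y : X,
        (∀ ε > 0, ∃ n : ℕ, dist ((⇑α.symm)^[n] x) ((⇑α.symm)^[n] y) < ε) → x = y)) := by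
  simpa only [isDistal_iff_dist] using stmt_8_general α
end

section
/- Let X be a compact metric space and α : X → X a homeomorphism, with E, E⁺, E⁻ the closures of {α^n : n ∈ ℤ}, {α^n : n ≥ 0}, {α^n : n ≤ 0} respectively in the space of self-maps of X with the product topology. Then the kernels (smallest two-sided ideals) M of E, M⁺ of E⁺ and M⁻ of E⁻ exist, M = M⁺ ∪ M⁻, and both M⁺ and M⁻ are left ideals of E. -/
/-- A left ideal of the subsemigroup `S` of self-maps of `X` (under composition). -/
def IsLeftIdealIn {X : Type*} (S L : Set (X → X)) : Prop :=
  L.Nonempty ∧ L ⊆ S ∧ ∀ f ∈ S, ∀ g ∈ L, f ∘ g ∈ L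

/-- A two-sided ideal of the subsemigroup `S` of self-maps of `X`. -/
def IsIdealIn {X : Type*} (S I : Set (X → X)) : Prop :=
  I.Nonempty ∧ I ⊆ S ∧ ∀ f ∈ S, ∀ g ∈ I, f ∘ g ∈ I ∧ g ∘ f ∈ I

/-- The kernel of `S`: the smallest two-sided ideal of `S`. -/
def IsKernelOf {X : Type*} (S K : Set (X → X)) : Prop :=
  IsIdealIn S K ∧ ∀ I : Set (X → X), IsIdealIn S I → K ⊆ I

/-!
In a semigroup of self-maps having a minimal left ideal, the kernel is the union of all minimal
left ideals. A compact Hausdorff right-topological semigroup has minimal left ideals, and they are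
closed.

Let `L` be a minimal left ideal of `E⁺`. As `α` is central in `E⁺`, the set `α ∘ L` is a left ideal
of `E⁺` inside `L`, so `α ∘ L = L` and hence `α⁻¹ ∘ L = L`. Because `L` is closed, it absorbs all of
`E⁻` on the left, so it is a left ideal of `E = E⁺ ∪ E⁻`. This forces `M⁺ = M ∩ E⁺`, and
symmetrically `M⁻ = M ∩ E⁻`.
-/

open Set

section Algebra

variable {X : Type*} {S T L : Set (X → X)}

/-- `S` is a subsemigroup (possibly empty) of the self-maps of `X` under composition. -/
def IsCompSubsemigroup (S : Set (X → X)) : Prop :=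
  ∀ f ∈ S, ∀ g ∈ S, f ∘ g ∈ S

/-- The minimal left ideals of `S`, ordered by inclusion. -/
abbrev IsMinimalLeftIdealIn (S L : Set (X → X)) : Prop :=
  Minimal (IsLeftIdealIn S) L

/-- The union of all minimal left ideals of `S`. It is the kernel of `S` as soon as it is nonempty,
see `isKernelOf_minimalLeftIdealUnion`. -/
def minimalLeftIdealUnion (S : Set (X → X)) : Set (X → X) :=
  ⋃₀ {L | IsMinimalLeftIdealIn S L}

theorem IsCompSubsemigroup.isLeftIdealIn_self (hS : IsCompSubsemigroup S) (hne : S.Nonempty) :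
    IsLeftIdealIn S S :=
  ⟨hne, subset_rfl, hS⟩

theorem IsLeftIdealIn.image_comp_right (hS : IsCompSubsemigroup S) (hL : IsLeftIdealIn S L)
    {f : X → X} (hf : f ∈ S) : IsLeftIdealIn S ((· ∘ f) '' L) := by
  obtain ⟨hne, hLS, hmul⟩ := hL
  refine ⟨hne.image _, ?_, ?_⟩
  · rintro _ ⟨k, hk, rfl⟩
    exact hS k (hLS hk) f hf
  · rintro p hp _ ⟨k, hk, rfl⟩
    exact ⟨p ∘ k, hmul p hp k hk, rfl⟩

theorem IsLeftIdealIn.image_comp_left_of_commute (hL : IsLeftIdealIn S L) {f : X → X} (hf : f ∈ S)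
    (hcomm : ∀ g ∈ S, Function.Commute f g) : IsLeftIdealIn S ((f ∘ ·) '' L) := by
  obtain ⟨hne, hLS, hmul⟩ := hL
  refine ⟨hne.image _, ?_, ?_⟩
  · rintro _ ⟨k, hk, rfl⟩
    exact hLS (hmul f hf k hk)
  · rintro p hp _ ⟨k, hk, rfl⟩
    exact ⟨p ∘ k, hmul p hp k hk, congrArg (· ∘ k) (hcomm p hp).comp_eq⟩

namespace IsMinimalLeftIdealIn

theorem image_comp_right (hS : IsCompSubsemigroup S) (hL : IsMinimalLeftIdealIn S L)
    {f : X → X} (hf : f ∈ S) : IsMinimalLeftIdealIn S ((· ∘ f) '' L) := by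
  refine ⟨hL.prop.image_comp_right hS hf, fun J hJ hsub ↦ image_subset_iff.2 ?_⟩
  have hpre : IsLeftIdealIn S (L ∩ (· ∘ f) ⁻¹' J) := by
    refine ⟨?_, inter_subset_left.trans hL.prop.2.1, fun p hp q hq ↦
      ⟨hL.prop.2.2 p hp q hq.1, hJ.2.2 p hp _ hq.2⟩⟩
    obtain ⟨r, hr⟩ := hJ.1
    obtain ⟨q, hq, rfl⟩ := hsub hr
    exact ⟨q, hq, hr⟩
  exact (hL.le_of_le hpre inter_subset_left).trans inter_subset_right

theorem image_comp_right_eq (hS : IsCompSubsemigroup S) (hL : IsMinimalLeftIdealIn S L)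
    {g : X → X} (hg : g ∈ L) : (· ∘ g) '' S = L := by
  have hgS : g ∈ S := hL.prop.2.1 hg
  refine hL.eq_of_le ((hS.isLeftIdealIn_self ⟨g, hgS⟩).image_comp_right hS hgS) ?_
  exact image_subset_iff.2 fun f hf ↦ hL.prop.2.2 f hf g hg

theorem image_comp_left_eq_of_commute (hL : IsMinimalLeftIdealIn S L) {f : X → X} (hf : f ∈ S)
    (hcomm : ∀ g ∈ S, Function.Commute f g) : (f ∘ ·) '' L = L :=
  hL.eq_of_le (hL.prop.image_comp_left_of_commute hf hcomm)
    (image_subset_iff.2 fun g hg ↦ hL.prop.2.2 f hf g hg)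

theorem subset_of_isIdealIn (hL : IsMinimalLeftIdealIn S L) {I : Set (X → X)}
    (hI : IsIdealIn S I) : L ⊆ I := by
  obtain ⟨⟨i, hi⟩, hIS, hmul⟩ := hI
  obtain ⟨g, hg⟩ := hL.prop.1
  have hinter : IsLeftIdealIn S (I ∩ L) :=
    ⟨⟨i ∘ g, (hmul g (hL.prop.2.1 hg) i hi).2, hL.prop.2.2 i (hIS hi) g hg⟩,
      inter_subset_left.trans hIS,
      fun p hp q hq ↦ ⟨(hmul p hp q hq.1).1, hL.prop.2.2 p hp q hq.2⟩⟩
  exact (hL.le_of_le hinter inter_subset_right).trans inter_subset_left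

theorem of_isLeftIdealIn (hTS : T ⊆ S) (hL : IsMinimalLeftIdealIn T L)
    (hLS : IsLeftIdealIn S L) : IsMinimalLeftIdealIn S L :=
  ⟨hLS, fun _ hJ hsub ↦ hL.le_of_le
    ⟨hJ.1, hsub.trans hL.prop.2.1, fun f hf ↦ hJ.2.2 f (hTS hf)⟩ hsub⟩

end IsMinimalLeftIdealIn

theorem isKernelOf_minimalLeftIdealUnion (hS : IsCompSubsemigroup S)
    (hmin : ∃ L, IsMinimalLeftIdealIn S L) : IsKernelOf S (minimalLeftIdealUnion S) := by
  refine ⟨⟨?_, sUnion_subset fun L hL ↦ hL.prop.2.1, ?_⟩,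
    fun I hI ↦ sUnion_subset fun L hL ↦ hL.subset_of_isIdealIn hI⟩
  · obtain ⟨L, hL⟩ := hmin
    exact hL.prop.1.mono (subset_sUnion_of_mem hL)
  · rintro f hf g ⟨L, hL, hg⟩
    exact ⟨⟨L, hL, hL.prop.2.2 f hf g hg⟩, _, hL.image_comp_right hS hf, mem_image_of_mem _ hg⟩

theorem isLeftIdealIn_minimalLeftIdealUnion (hmin : ∃ L, IsMinimalLeftIdealIn T L)
    (hleft : ∀ L, IsMinimalLeftIdealIn T L → IsLeftIdealIn S L) :
    IsLeftIdealIn S (minimalLeftIdealUnion T) := by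
  refine ⟨?_, sUnion_subset fun L hL ↦ (hleft L hL).2.1, ?_⟩
  · obtain ⟨L, hL⟩ := hmin
    exact hL.prop.1.mono (subset_sUnion_of_mem hL)
  · rintro f hf g ⟨L, hL, hg⟩
    exact ⟨L, hL, (hleft L hL).2.2 f hf g hg⟩

theorem minimalLeftIdealUnion_eq_inter (hT : IsCompSubsemigroup T) (hTS : T ⊆ S)
    (hmin : ∃ L, IsMinimalLeftIdealIn T L)
    (hleft : ∀ L, IsMinimalLeftIdealIn T L → IsLeftIdealIn S L) :
    minimalLeftIdealUnion T = minimalLeftIdealUnion S ∩ T := by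
  apply Subset.antisymm
  · rintro f ⟨L, hL, hf⟩
    exact ⟨⟨L, hL.of_isLeftIdealIn hTS (hleft L hL), hf⟩, hL.prop.2.1 hf⟩
  · rintro f ⟨⟨L, hL, hfL⟩, hfT⟩
    obtain ⟨L₀, hL₀⟩ := hmin
    have hL₀f : IsMinimalLeftIdealIn T ((· ∘ f) '' L₀) := hL₀.image_comp_right hT hfT
    have hsub : (· ∘ f) '' L₀ ⊆ L :=
      image_subset_iff.2 fun k hk ↦ hL.prop.2.2 k (hTS (hL₀.prop.2.1 hk)) f hfL
    have heq : (· ∘ f) '' L₀ = L := hL.eq_of_le (hleft _ hL₀f) hsub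
    exact ⟨_, hL₀f, heq ▸ hfL⟩

end Algebra

section Topology

variable {X : Type*} [TopologicalSpace X] {S L : Set (X → X)}

theorem isCompSubsemigroup_closure (hS : IsCompSubsemigroup S) (hcont : ∀ f ∈ S, Continuous f) :
    IsCompSubsemigroup (closure S) := by
  have hleft : ∀ f ∈ S, ∀ g ∈ closure S, f ∘ g ∈ closure S := fun f hf _ hg ↦
    map_mem_closure (Pi.continuous_postcomp (hcont f hf)) hg (hS f hf)
  intro f hf g hg
  exact closure_minimal (fun f hf ↦ hleft f hf g hg)
    (isClosed_closure.preimage (Pi.continuous_precomp g)) hf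

theorem IsMinimalLeftIdealIn.isClosed [T2Space X] (hS : IsCompSubsemigroup S)
    (hcomp : IsCompact S) (hL : IsMinimalLeftIdealIn S L) : IsClosed L := by
  obtain ⟨g, hg⟩ := hL.prop.1
  rw [← hL.image_comp_right_eq hS hg]
  exact (hcomp.image (Pi.continuous_precomp g)).isClosed

theorem isLeftIdealIn_sInter_of_directedOn {c : Set (Set (X → X))} (hne : c.Nonempty)
    (hdir : DirectedOn (· ⊇ ·) c) (hideal : ∀ L ∈ c, IsLeftIdealIn S L)
    (hcomp : ∀ L ∈ c, IsCompact L) (hclosed : ∀ L ∈ c, IsClosed L) :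
    IsLeftIdealIn S (⋂₀ c) := by
  have : Nonempty c := hne.to_subtype
  refine ⟨IsCompact.nonempty_sInter_of_directed_nonempty_isCompact_isClosed
    hdir (fun L hL ↦ (hideal L hL).1) hcomp hclosed, ?_,
    fun f hf g hg L hL ↦ (hideal L hL).2.2 f hf g (hg L hL)⟩
  obtain ⟨L, hL⟩ := hne
  exact (sInter_subset_of_mem hL).trans (hideal L hL).2.1

theorem exists_isMinimalLeftIdealIn [T2Space X] (hS : IsCompSubsemigroup S) (hcomp : IsCompact S)
    (hne : S.Nonempty) : ∃ L, IsMinimalLeftIdealIn S L := by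
  have hlower : ∀ c ⊆ {L | IsLeftIdealIn S L ∧ IsClosed L}, IsChain (· ⊆ ·) c → c.Nonempty →
      ∃ lb ∈ {L | IsLeftIdealIn S L ∧ IsClosed L}, ∀ L ∈ c, lb ⊆ L := by
    intro c hc hchain hcne
    have hsuperset : IsChain (· ⊇ ·) c := hchain.symm
    have hideal : IsLeftIdealIn S (⋂₀ c) :=
      isLeftIdealIn_sInter_of_directedOn hcne hsuperset.directedOn
        (fun L hL ↦ (hc hL).1)
        (fun L hL ↦ hcomp.of_isClosed_subset (hc hL).2 (hc hL).1.2.1)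
        (fun L hL ↦ (hc hL).2)
    exact ⟨⋂₀ c, ⟨hideal, isClosed_sInter fun L hL ↦ (hc hL).2⟩, fun _ ↦ sInter_subset_of_mem⟩
  obtain ⟨L, -, hL⟩ := zorn_superset_nonempty _ hlower S
    ⟨hS.isLeftIdealIn_self hne, hcomp.isClosed⟩
  refine ⟨L, hL.prop.1, fun J hJ hsub ↦ ?_⟩
  -- Every left ideal contains a closed one, namely `S ∘ g` for any element `g` of it.
  obtain ⟨g, hg⟩ := hJ.1
  have hSg : (· ∘ g) '' S ⊆ J := image_subset_iff.2 fun f hf ↦ hJ.2.2 f hf g hg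
  have hideal : IsLeftIdealIn S ((· ∘ g) '' S) :=
    (hS.isLeftIdealIn_self hne).image_comp_right hS (hJ.2.1 hg)
  have hclosed : IsClosed ((· ∘ g) '' S) := (hcomp.image (Pi.continuous_precomp g)).isClosed
  exact (hL.le_of_le ⟨hideal, hclosed⟩ (hSg.trans hsub)).trans hSg

end Topology

section Ellis

variable {X : Type*} [TopologicalSpace X]

/-- The closure of the nonnegative iterates of `f` in the topology of pointwise convergence:
`E⁺` for `f = α` and `E⁻` for `f = α⁻¹`. -/
def forwardEllisSemigroup (f : X → X) : Set (X → X) :=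
  closure {h : X → X | ∃ n : ℕ, h = f^[n]}

/-- The Ellis semigroup `E` of the `ℤ`-action generated by `α`. -/
def ellisSemigroup (α : X ≃ₜ X) : Set (X → X) :=
  closure {h : X → X | ∃ n : ℤ, h = zIter α n}

theorem self_mem_forwardEllisSemigroup (f : X → X) : f ∈ forwardEllisSemigroup f :=
  subset_closure ⟨1, rfl⟩

theorem isCompSubsemigroup_forwardEllisSemigroup {f : X → X} (hf : Continuous f) :
    IsCompSubsemigroup (forwardEllisSemigroup f) := by
  refine isCompSubsemigroup_closure ?_ ?_
  · rintro _ ⟨m, rfl⟩ _ ⟨n, rfl⟩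
    exact ⟨m + n, (f.iterate_add m n).symm⟩
  · rintro _ ⟨n, rfl⟩
    exact hf.iterate n

theorem commute_of_mem_forwardEllisSemigroup [T2Space X] {f g : X → X} (hf : Continuous f)
    (hg : g ∈ forwardEllisSemigroup f) : Function.Commute f g := by
  have hclosed : IsClosed {h : X → X | f ∘ h = h ∘ f} :=
    isClosed_eq (Pi.continuous_postcomp hf) (Pi.continuous_precomp f)
  refine Function.semiconj_iff_comp_eq.2 (closure_minimal ?_ hclosed hg)
  rintro _ ⟨n, rfl⟩
  exact (Function.Commute.self_iterate f n).comp_eq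

theorem comp_mem_of_mem_forwardEllisSemigroup {L : Set (X → X)} (hL : IsClosed L) {f : X → X}
    (hf : ∀ g ∈ L, f ∘ g ∈ L) {p : X → X} (hp : p ∈ forwardEllisSemigroup f) {g : X → X}
    (hg : g ∈ L) : p ∘ g ∈ L := by
  refine closure_minimal ?_ (hL.preimage (Pi.continuous_precomp g)) hp
  rintro _ ⟨n, rfl⟩
  induction n with
  | zero => exact hg
  | succ n ih =>
    rw [Function.iterate_succ']
    exact hf _ ih

theorem exists_isMinimalLeftIdealIn_forwardEllisSemigroup [CompactSpace X] [T2Space X]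
    {f : X → X} (hf : Continuous f) : ∃ L, IsMinimalLeftIdealIn (forwardEllisSemigroup f) L :=
  exists_isMinimalLeftIdealIn (isCompSubsemigroup_forwardEllisSemigroup hf)
    isClosed_closure.isCompact ⟨f, self_mem_forwardEllisSemigroup f⟩

theorem zIter_natCast (α : X ≃ₜ X) (n : ℕ) : zIter α n = α^[n] := by
  simp [zIter]

theorem zIter_neg_natCast (α : X ≃ₜ X) (n : ℕ) : zIter α (-n) = α.symm^[n] := by
  cases n with
  | zero => rfl
  | succ n => rfl

theorem zIter_eq_zpow (α : X ≃ₜ X) (n : ℤ) : zIter α n = ⇑(α ^ n) := by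
  have coe_pow (β : X ≃ₜ X) (n : ℕ) : ⇑(β ^ n) = β^[n] := hom_coe_pow _ rfl (fun _ _ ↦ rfl) β n
  obtain ⟨n, rfl | rfl⟩ := n.eq_nat_or_neg
  · rw [zIter_natCast, zpow_natCast, coe_pow]
  · rw [zIter_neg_natCast, zpow_neg, zpow_natCast, ← inv_pow, coe_pow]
    rfl

theorem isCompSubsemigroup_ellisSemigroup (α : X ≃ₜ X) :
    IsCompSubsemigroup (ellisSemigroup α) := by
  refine isCompSubsemigroup_closure ?_ ?_
  · rintro _ ⟨m, rfl⟩ _ ⟨n, rfl⟩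
    refine ⟨m + n, ?_⟩
    simp only [zIter_eq_zpow, zpow_add]
    rfl
  · rintro _ ⟨n, rfl⟩
    rw [zIter_eq_zpow]
    exact (α ^ n).continuous

theorem ellisSemigroup_eq_union (α : X ≃ₜ X) :
    ellisSemigroup α = forwardEllisSemigroup α ∪ forwardEllisSemigroup α.symm := by
  rw [ellisSemigroup, forwardEllisSemigroup, forwardEllisSemigroup, ← closure_union]
  congr 1
  apply Subset.antisymm
  · rintro _ ⟨n, rfl⟩
    obtain ⟨n, rfl | rfl⟩ := n.eq_nat_or_neg
    · exact Or.inl ⟨n, zIter_natCast α n⟩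
    · exact Or.inr ⟨n, zIter_neg_natCast α n⟩
  · rintro _ (⟨n, rfl⟩ | ⟨n, rfl⟩)
    · exact ⟨n, (zIter_natCast α n).symm⟩
    · exact ⟨-n, (zIter_neg_natCast α n).symm⟩

theorem ellisSemigroup_symm (α : X ≃ₜ X) : ellisSemigroup α.symm = ellisSemigroup α := by
  rw [ellisSemigroup_eq_union, ellisSemigroup_eq_union, union_comm, Homeomorph.symm_symm]

theorem forwardEllisSemigroup_subset_ellisSemigroup (α : X ≃ₜ X) :
    forwardEllisSemigroup α ⊆ ellisSemigroup α :=
  ellisSemigroup_eq_union α ▸ subset_union_left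

variable [CompactSpace X] [T2Space X]

theorem exists_isMinimalLeftIdealIn_ellisSemigroup (α : X ≃ₜ X) :
    ∃ L, IsMinimalLeftIdealIn (ellisSemigroup α) L :=
  exists_isMinimalLeftIdealIn (isCompSubsemigroup_ellisSemigroup α) isClosed_closure.isCompact
    ⟨α, forwardEllisSemigroup_subset_ellisSemigroup α (self_mem_forwardEllisSemigroup α)⟩

theorem IsMinimalLeftIdealIn.isLeftIdealIn_ellisSemigroup {α : X ≃ₜ X} {L : Set (X → X)}
    (hL : IsMinimalLeftIdealIn (forwardEllisSemigroup α) L) :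
    IsLeftIdealIn (ellisSemigroup α) L := by
  have hclosed : IsClosed L := hL.isClosed
    (isCompSubsemigroup_forwardEllisSemigroup α.continuous) isClosed_closure.isCompact
  have himage : (α ∘ ·) '' L = L := hL.image_comp_left_eq_of_commute
    (self_mem_forwardEllisSemigroup α)
    fun _ ↦ commute_of_mem_forwardEllisSemigroup α.continuous
  have hsymm : ∀ g ∈ L, α.symm ∘ g ∈ L := by
    intro g hg
    obtain ⟨k, hk, rfl⟩ := himage.symm ▸ hg
    rwa [← Function.comp_assoc, α.symm_comp_self, Function.id_comp]
  refine ⟨hL.prop.1, hL.prop.2.1.trans (forwardEllisSemigroup_subset_ellisSemigroup α), ?_⟩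
  intro f hf g hg
  rcases ellisSemigroup_eq_union α ▸ hf with hfwd | hbwd
  · exact hL.prop.2.2 f hfwd g hg
  · exact comp_mem_of_mem_forwardEllisSemigroup hclosed hsymm hbwd hg

theorem isKernelOf_forwardEllisSemigroup {f : X → X} (hf : Continuous f) :
    IsKernelOf (forwardEllisSemigroup f) (minimalLeftIdealUnion (forwardEllisSemigroup f)) :=
  isKernelOf_minimalLeftIdealUnion (isCompSubsemigroup_forwardEllisSemigroup hf)
    (exists_isMinimalLeftIdealIn_forwardEllisSemigroup hf)

theorem isKernelOf_ellisSemigroup (α : X ≃ₜ X) :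
    IsKernelOf (ellisSemigroup α) (minimalLeftIdealUnion (ellisSemigroup α)) :=
  isKernelOf_minimalLeftIdealUnion (isCompSubsemigroup_ellisSemigroup α)
    (exists_isMinimalLeftIdealIn_ellisSemigroup α)

theorem isLeftIdealIn_minimalLeftIdealUnion_forwardEllisSemigroup (α : X ≃ₜ X) :
    IsLeftIdealIn (ellisSemigroup α) (minimalLeftIdealUnion (forwardEllisSemigroup α)) :=
  isLeftIdealIn_minimalLeftIdealUnion
    (exists_isMinimalLeftIdealIn_forwardEllisSemigroup α.continuous)
    fun _ hL ↦ hL.isLeftIdealIn_ellisSemigroup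

theorem minimalLeftIdealUnion_forwardEllisSemigroup (α : X ≃ₜ X) :
    minimalLeftIdealUnion (forwardEllisSemigroup α) =
      minimalLeftIdealUnion (ellisSemigroup α) ∩ forwardEllisSemigroup α :=
  minimalLeftIdealUnion_eq_inter (isCompSubsemigroup_forwardEllisSemigroup α.continuous)
    (forwardEllisSemigroup_subset_ellisSemigroup α)
    (exists_isMinimalLeftIdealIn_forwardEllisSemigroup α.continuous)
    fun _ hL ↦ hL.isLeftIdealIn_ellisSemigroup

theorem minimalLeftIdealUnion_ellisSemigroup (α : X ≃ₜ X) :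
    minimalLeftIdealUnion (ellisSemigroup α) =
      minimalLeftIdealUnion (forwardEllisSemigroup α) ∪
        minimalLeftIdealUnion (forwardEllisSemigroup α.symm) := by
  rw [minimalLeftIdealUnion_forwardEllisSemigroup, minimalLeftIdealUnion_forwardEllisSemigroup,
    ellisSemigroup_symm, ← inter_union_distrib_left, ← ellisSemigroup_eq_union]
  exact (inter_eq_left.2 (isKernelOf_ellisSemigroup α).1.2.1).symm

end Ellis

theorem stmt_9_general {X : Type*} [TopologicalSpace X] [CompactSpace X] [T2Space X]
    (α : X ≃ₜ X) :
    ∃ M Mp Mm : Set (X → X),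
      IsKernelOf (closure {h : X → X | ∃ n : ℤ, h = zIter α n}) M ∧
      IsKernelOf (closure {h : X → X | ∃ n : ℕ, h = (⇑α)^[n]}) Mp ∧
      IsKernelOf (closure {h : X → X | ∃ n : ℕ, h = (⇑α.symm)^[n]}) Mm ∧
      M = Mp ∪ Mm ∧
      IsLeftIdealIn (closure {h : X → X | ∃ n : ℤ, h = zIter α n}) Mp ∧
      IsLeftIdealIn (closure {h : X → X | ∃ n : ℤ, h = zIter α n}) Mm := by
  have hbackward : IsLeftIdealIn (ellisSemigroup α)
      (minimalLeftIdealUnion (forwardEllisSemigroup α.symm)) :=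
    ellisSemigroup_symm α ▸ isLeftIdealIn_minimalLeftIdealUnion_forwardEllisSemigroup α.symm
  exact ⟨minimalLeftIdealUnion (ellisSemigroup α),
    minimalLeftIdealUnion (forwardEllisSemigroup α),
    minimalLeftIdealUnion (forwardEllisSemigroup α.symm),
    isKernelOf_ellisSemigroup α,
    isKernelOf_forwardEllisSemigroup α.continuous,
    isKernelOf_forwardEllisSemigroup α.symm.continuous,
    minimalLeftIdealUnion_ellisSemigroup α,
    isLeftIdealIn_minimalLeftIdealUnion_forwardEllisSemigroup α,
    hbackward⟩

/-- For a homeomorphism `α` of a compact metric space, the kernels `M`, `M⁺`,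
`M⁻` of `E`, `E⁺`, `E⁻` exist, `M = M⁺ ∪ M⁻`, and `M⁺`, `M⁻` are left ideals of `E`. -/
theorem stmt_9 {X : Type*} [MetricSpace X] [CompactSpace X] (α : X ≃ₜ X) :
    ∃ M Mp Mm : Set (X → X),
      IsKernelOf (closure {h : X → X | ∃ n : ℤ, h = zIter α n}) M ∧
      IsKernelOf (closure {h : X → X | ∃ n : ℕ, h = (⇑α)^[n]}) Mp ∧
      IsKernelOf (closure {h : X → X | ∃ n : ℕ, h = (⇑α.symm)^[n]}) Mm ∧
      M = Mp ∪ Mm ∧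
      IsLeftIdealIn (closure {h : X → X | ∃ n : ℤ, h = zIter α n}) Mp ∧
      IsLeftIdealIn (closure {h : X → X | ∃ n : ℤ, h = zIter α n}) Mm :=
  stmt_9_general α
end
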